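/- arXiv:math/0305205 — 2 statements merged into one kernel-verified Lean document; each statement's English description precedes it below -/
import Mathlib

section
/- For any Artin generator σ_k of B_n and any nonzero integer c, the centralizer of σ_k in B_n is equal to the centralizer of σ_k^c in B_n. -/
/-- The Artin braid relations on `m` generators (for the braid group `B_{m+1}`):
commutation `σ_i σ_j = σ_j σ_i` for `|i - j| > 1`, and the braid relation
`σ_i σ_j σ_i = σ_j σ_i σ_j` for `j = i + 1`, written as relators. -/
def braidRels (m : ℕ) : Set (FreeGroup (Fin m)) :=
  { r | (∃ i j : Fin m, (i : ℕ) + 1 < (j : ℕ) ∧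
          r = FreeGroup.of i * FreeGroup.of j * (FreeGroup.of i)⁻¹ * (FreeGroup.of j)⁻¹) ∨
        (∃ i j : Fin m, (i : ℕ) + 1 = (j : ℕ) ∧
          r = FreeGroup.of i * FreeGroup.of j * FreeGroup.of i *
              (FreeGroup.of j * FreeGroup.of i * FreeGroup.of j)⁻¹) }

/-- The braid group `B_n`, presented on the `n - 1` Artin generators. -/
abbrev BraidGroup (n : ℕ) : Type := PresentedGroup (braidRels (n - 1))

/-- The Artin generator `σ_i` of the braid group `B_n`. -/
def σ {n : ℕ} (i : Fin (n - 1)) : BraidGroup n := PresentedGroup.of i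


namespace BraidAux

/-- Relations of the positive braid monoid. -/
inductive BRel (m : ℕ) : FreeMonoid (Fin m) → FreeMonoid (Fin m) → Prop
  | comm (i j : Fin m) (h : (i : ℕ) + 1 < (j : ℕ)) :
      BRel m (FreeMonoid.of i * FreeMonoid.of j) (FreeMonoid.of j * FreeMonoid.of i)
  | braid (i j : Fin m) (h : (i : ℕ) + 1 = (j : ℕ)) :
      BRel m (FreeMonoid.of i * (FreeMonoid.of j * FreeMonoid.of i))
        (FreeMonoid.of j * (FreeMonoid.of i * FreeMonoid.of j))

/-- The positive braid monoid. -/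
abbrev BM (m : ℕ) := PresentedMonoid (BRel m)

variable {m : ℕ}

/-- generators -/
def s (i : Fin m) : BM m := PresentedMonoid.of (BRel m) i

/-- distant indices -/
def Far (i j : Fin m) : Prop := (i : ℕ) + 1 < j ∨ (j : ℕ) + 1 < i
/-- adjacent indices -/
def Adj (i j : Fin m) : Prop := (i : ℕ) + 1 = j ∨ (j : ℕ) + 1 = i

lemma Far.symm {i j : Fin m} (h : Far i j) : Far j i := Or.symm h
lemma Adj.symm {i j : Fin m} (h : Adj i j) : Adj j i := Or.symm h

lemma tri (i j : Fin m) : i = j ∨ Far i j ∨ Adj i j := by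
  unfold Far Adj
  rw [Fin.ext_iff]; omega

lemma not_far_self (i : Fin m) : ¬ Far i i := by unfold Far; omega
lemma not_adj_self (i : Fin m) : ¬ Adj i i := by unfold Adj; omega
lemma not_far_adj {i j : Fin m} (h : Far i j) (h' : Adj i j) : False := by
  unfold Far Adj at *; omega
lemma no_triangle {i j k : Fin m} (h : Adj i j) (h' : Adj j k) (h'' : Adj i k) : False := by
  unfold Adj at *; omega

lemma comm0 {i j : Fin m} (h : Far i j) : s i * s j = s j * s i := by
  rcases h with h | h
  · exact PresentedMonoid.mk_eq_mk_of_rel (BRel.comm i j h)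
  · exact (PresentedMonoid.mk_eq_mk_of_rel (BRel.comm j i h)).symm

lemma braid0 {i j : Fin m} (h : Adj i j) : s i * (s j * s i) = s j * (s i * s j) := by
  rcases h with h | h
  · exact PresentedMonoid.mk_eq_mk_of_rel (BRel.braid i j h)
  · exact (PresentedMonoid.mk_eq_mk_of_rel (BRel.braid j i h)).symm

lemma comm1 {i j : Fin m} (h : Far i j) (x : BM m) : s i * (s j * x) = s j * (s i * x) := by
  rw [← mul_assoc, comm0 h, mul_assoc]

lemma braid1 {i j : Fin m} (h : Adj i j) (x : BM m) :
    s i * (s j * (s i * x)) = s j * (s i * (s j * x)) := by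
  have := congrArg (· * x) (braid0 h)
  simpa [mul_assoc] using this

/-- length homomorphism -/
def lenHom : BM m →* Multiplicative ℕ :=
  PresentedMonoid.lift (fun _ => Multiplicative.ofAdd 1) (by
    intro a b h
    cases h <;> simp)

/-- length -/
def ln (x : BM m) : ℕ := (lenHom x).toAdd

@[simp] lemma ln_one : ln (1 : BM m) = 0 := by simp [ln]
@[simp] lemma ln_mul (x y : BM m) : ln (x * y) = ln x + ln y := by simp [ln]
@[simp] lemma ln_s (i : Fin m) : ln (s i) = 1 := by
  have : lenHom (s i) = Multiplicative.ofAdd 1 := PresentedMonoid.lift_of _ _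
  simp [ln, this]

lemma ln_mk (w : FreeMonoid (Fin m)) : ln (PresentedMonoid.mk (BRel m) w) = w.length := by
  induction w using FreeMonoid.inductionOn' with
  | one => simp
  | of_mul i w ih =>
    rw [map_mul, ln_mul, ih, FreeMonoid.length_mul, FreeMonoid.length_of]
    congr 1

lemma exists_cons (x : BM m) : x = 1 ∨ ∃ i y, x = s i * y := by
  induction x using PresentedMonoid.inductionOn with
  | _ w =>
    induction w using FreeMonoid.inductionOn' with
    | one => left; rfl
    | of_mul i w _ => right; exact ⟨i, PresentedMonoid.mk _ w, rfl⟩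

/-- Conclusion of the Garside lemma. -/
def R (i : Fin m) (x : BM m) (j : Fin m) (y : BM m) : Prop :=
  (i = j ∧ x = y) ∨ (Far i j ∧ ∃ z, x = s j * z ∧ y = s i * z) ∨
    (Adj i j ∧ ∃ z, x = s j * (s i * z) ∧ y = s i * (s j * z))

lemma R.symm {i j : Fin m} {x y : BM m} (h : R i x j y) : R j y i x := by
  rcases h with ⟨h, h'⟩ | ⟨h, z, h1, h2⟩ | ⟨h, z, h1, h2⟩
  · exact Or.inl ⟨h.symm, h'.symm⟩
  · exact Or.inr (Or.inl ⟨h.symm, z, h2, h1⟩)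
  · exact Or.inr (Or.inr ⟨h.symm, z, h2, h1⟩)

lemma R.eq {i : Fin m} {x y : BM m} (h : R i x i y) : x = y := by
  rcases h with ⟨_, h'⟩ | ⟨h, _⟩ | ⟨h, _⟩
  · exact h'
  · exact (not_far_self i h).elim
  · exact (not_adj_self i h).elim

lemma R.far {i j : Fin m} {x y : BM m} (h : R i x j y) (hf : Far i j) :
    ∃ z, x = s j * z ∧ y = s i * z := by
  rcases h with ⟨h, h'⟩ | ⟨_, h⟩ | ⟨h, _⟩
  · subst h; exact (not_far_self i hf).elim
  · exact h
  · exact (not_far_adj hf h).elim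

lemma R.adj {i j : Fin m} {x y : BM m} (h : R i x j y) (hf : Adj i j) :
    ∃ z, x = s j * (s i * z) ∧ y = s i * (s j * z) := by
  rcases h with ⟨h, h'⟩ | ⟨h, _⟩ | ⟨_, h⟩
  · subst h; exact (not_adj_self i hf).elim
  · exact (not_far_adj h hf).elim
  · exact h

/-- Garside's lemma for tails of length less than `L`. -/
def GH (m L : ℕ) : Prop := ∀ (i j : Fin m) (x y : BM m), ln x < L → s i * x = s j * y → R i x j y

lemma R.trans_far_adj {L : ℕ} (H : GH m L) {i k j : Fin m} {x w y : BM m} (hL : ln w ≤ L)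
    (fik : Far i k) (akj : Adj k j) (h1 : R i x k w) (h2 : R k w j y) : R i x j y := by
  obtain ⟨z, rfl, rfl⟩ := h1.far fik
  obtain ⟨z', hw, rfl⟩ := h2.adj akj
  have e1 := congrArg ln hw
  simp at hL e1
  rcases tri i j with rfl | fij | aij
  · exact (not_far_adj fik.symm akj).elim
  · obtain ⟨t, rfl, ht⟩ := (H i j z _ (by omega) hw).far fij
    simp at e1 hL
    obtain ⟨u, rfl, rfl⟩ := (H k i z' t (by omega) ht).far fik.symm
    refine Or.inr (Or.inl ⟨fij, s k * (s j * u), ?_, ?_⟩)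
    · rw [braid1 akj]
    · rw [comm1 fij.symm, comm1 fik.symm]
  · obtain ⟨t, rfl, ht⟩ := (H i j z _ (by omega) hw).adj aij
    simp at e1 hL
    obtain ⟨u, rfl, hu⟩ := (H k i z' _ (by omega) ht).far fik.symm
    have e2 := congrArg ln hu
    simp at e1 e2 hL
    obtain ⟨v, rfl, rfl⟩ := (H j k t u (by omega) hu).adj akj.symm
    refine Or.inr (Or.inr ⟨aij, s k * (s j * (s i * v)), ?_, ?_⟩)
    · rw [comm1 fik, braid1 akj, braid1 aij.symm, comm1 fik.symm]
    · rw [braid1 aij.symm, comm1 fik.symm, comm1 fik v, braid1 akj]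

lemma R.trans {L : ℕ} (H : GH m L) {i k j : Fin m} {x w y : BM m} (hL : ln w ≤ L)
    (h1 : R i x k w) (h2 : R k w j y) : R i x j y := by
  rcases tri i k with rfl | fik | aik
  · rw [h1.eq]; exact h2
  · rcases tri k j with rfl | fkj | akj
    · rw [← h2.eq]; exact h1
    · obtain ⟨z, rfl, rfl⟩ := h1.far fik
      obtain ⟨z', hw, rfl⟩ := h2.far fkj
      simp at hL
      rcases H i j z z' (by omega) hw with ⟨rfl, rfl⟩ | ⟨fij, t, rfl, rfl⟩ | ⟨aij, t, rfl, rfl⟩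
      · exact Or.inl ⟨rfl, rfl⟩
      · refine Or.inr (Or.inl ⟨fij, s k * t, ?_, ?_⟩)
        · rw [comm1 fkj]
        · rw [comm1 fik]
      · refine Or.inr (Or.inr ⟨aij, s k * t, ?_, ?_⟩)
        · rw [comm1 fkj, comm1 fik]
        · rw [comm1 fik.symm, comm1 fkj]
    · exact R.trans_far_adj H hL fik akj h1 h2
  · rcases tri k j with rfl | fkj | akj
    · rw [← h2.eq]; exact h1
    · exact (R.trans_far_adj H hL fkj.symm aik.symm h2.symm h1.symm).symm
    · obtain ⟨z, rfl, rfl⟩ := h1.adj aik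
      obtain ⟨z', hw, rfl⟩ := h2.adj akj
      have e1 := congrArg ln hw
      simp at hL e1
      rcases tri i j with rfl | fij | aij
      · have := (H _ _ _ _ (by simp; omega) hw).eq
        have := (H _ _ _ _ (by omega) this).eq
        exact Or.inl ⟨rfl, by rw [this]⟩
      · obtain ⟨t, ht, ht'⟩ := (H _ _ _ _ (by simp; omega) hw).far fij
        obtain ⟨u, rfl, rfl⟩ := (H _ _ _ _ (by omega) ht).adj akj
        obtain ⟨v, rfl, hv⟩ := (H _ _ _ _ (by omega) ht').adj aik.symm
        simp at hL e1
        have hv := (H _ _ _ _ (by simp; omega) hv).eq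
        obtain ⟨r, rfl, rfl⟩ := (H _ _ _ _ (by omega) hv).far fij.symm
        refine Or.inr (Or.inl ⟨fij, s k * (s j * (s i * (s k * r))), ?_, ?_⟩)
        · rw [comm1 fij, braid1 aik, braid1 akj]
        · rw [comm1 fij.symm, braid1 akj.symm, braid1 aik.symm, comm1 fij]
      · exact (no_triangle aik akj aij).elim

lemma R.mul_right {i j : Fin m} {x y : BM m} (h : R i x j y) (z : BM m) :
    R i (x * z) j (y * z) := by
  rcases h with ⟨h, h'⟩ | ⟨h, t, rfl, rfl⟩ | ⟨h, t, rfl, rfl⟩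
  · exact Or.inl ⟨h, by rw [h']⟩
  · exact Or.inr (Or.inl ⟨h, t * z, by simp [mul_assoc], by simp [mul_assoc]⟩)
  · exact Or.inr (Or.inr ⟨h, t * z, by simp [mul_assoc], by simp [mul_assoc]⟩)

/-- quotient map -/
abbrev q (w : FreeMonoid (Fin m)) : BM m := PresentedMonoid.mk (BRel m) w

lemma cons_inj {i j : Fin m} {x y : FreeMonoid (Fin m)}
    (h : FreeMonoid.of i * x = FreeMonoid.of j * y) : i = j ∧ x = y := by
  have : i :: x.toList = j :: y.toList := congrArg FreeMonoid.toList h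
  simpa using this

lemma word_cases (w : FreeMonoid (Fin m)) : w = 1 ∨ ∃ i y, w = FreeMonoid.of i * y := by
  induction w using FreeMonoid.inductionOn' with
  | one => left; rfl
  | of_mul i w _ => right; exact ⟨i, w, rfl⟩

lemma GH_word {L : ℕ} (H : GH m L) {u v : FreeMonoid (Fin m)} (h : ConGen.Rel (BRel m) u v) :
    u.length = v.length ∧ (u.length ≤ L + 1 → ∀ i x j y, u = FreeMonoid.of i * x →
      v = FreeMonoid.of j * y → R i (q x) j (q y)) := by
  induction h with
  | of u v h =>
    cases h with
    | comm a b h =>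
      refine ⟨by simp, fun _ i x j y h1 h2 => ?_⟩
      obtain ⟨rfl, rfl⟩ := cons_inj h1
      obtain ⟨rfl, rfl⟩ := cons_inj h2
      exact Or.inr (Or.inl ⟨Or.inl h, 1, by rw [mul_one]; rfl, by rw [mul_one]; rfl⟩)
    | braid a b h =>
      refine ⟨by simp, fun _ i x j y h1 h2 => ?_⟩
      obtain ⟨rfl, rfl⟩ := cons_inj h1
      obtain ⟨rfl, rfl⟩ := cons_inj h2
      exact Or.inr (Or.inr ⟨Or.inl h, 1, by rw [mul_one]; rfl, by rw [mul_one]; rfl⟩)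
  | refl u =>
    refine ⟨rfl, fun _ i x j y h1 h2 => ?_⟩
    obtain ⟨rfl, rfl⟩ := cons_inj (h1.symm.trans h2)
    exact Or.inl ⟨rfl, rfl⟩
  | symm _ ih =>
    exact ⟨ih.1.symm, fun hl i x j y h1 h2 => (ih.2 (ih.1 ▸ hl) j y i x h2 h1).symm⟩
  | @trans u w v _ _ ih1 ih2 =>
    refine ⟨ih1.1.trans ih2.1, fun hl i x j y h1 h2 => ?_⟩
    rcases word_cases w with rfl | ⟨k, w, rfl⟩
    · have := ih1.1
      simp [h1] at this
    · have e := ih1.1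
      simp at e
      refine R.trans H (w := q w) ?_ (ih1.2 hl i x k w h1 rfl) (ih2.2 (ih1.1 ▸ hl) k w j y rfl h2)
      rw [ln_mk]; omega
  | @mul u1 v1 u2 v2 _ h2 ih1 ih2 =>
    refine ⟨by simp [ih1.1, ih2.1], fun hl i x j y e1 e2 => ?_⟩
    simp at hl
    rcases word_cases u1 with rfl | ⟨a, u1, rfl⟩
    · rcases word_cases v1 with rfl | ⟨b, v1, rfl⟩
      · rw [one_mul] at e1 e2
        exact ih2.2 (by omega) i x j y e1 e2
      · have := ih1.1
        simp at this
        try omega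
    · rcases word_cases v1 with rfl | ⟨b, v1, rfl⟩
      · have := ih1.1
        simp at this
        try omega
      · rw [mul_assoc] at e1 e2
        obtain ⟨rfl, rfl⟩ := cons_inj e1
        obtain ⟨rfl, rfl⟩ := cons_inj e2
        have h3 := (ih1.2 (by omega) a u1 b v1 rfl rfl).mul_right (q u2)
        have h4 : q u2 = q v2 := PresentedMonoid.mk_eq_mk_iff.2 h2
        rw [q, q, map_mul, map_mul]
        rw [show PresentedMonoid.mk (BRel m) v2 = PresentedMonoid.mk (BRel m) u2 from h4.symm]
        exact h3

lemma GH_all (L : ℕ) : GH m L := by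
  induction L with
  | zero => intro i j x y h; omega
  | succ L ih =>
    intro i j x y hl h
    induction x using PresentedMonoid.inductionOn with
    | _ x =>
      induction y using PresentedMonoid.inductionOn with
      | _ y =>
        rw [ln_mk] at hl
        have h' : ConGen.Rel (BRel m) (FreeMonoid.of i * x) (FreeMonoid.of j * y) :=
          PresentedMonoid.mk_eq_mk_iff.1 h
        exact (GH_word ih h').2 (by simp; omega) i x j y rfl rfl

lemma garside {i j : Fin m} {x y : BM m} (h : s i * x = s j * y) : R i x j y :=
  GH_all (ln x + 1) i j x y (by omega) h

lemma cancel_s {i : Fin m} {x y : BM m} (h : s i * x = s i * y) : x = y := (garside h).eq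

lemma cancel (a : BM m) : ∀ x y : BM m, a * x = a * y → x = y := by
  induction a using PresentedMonoid.inductionOn with
  | _ w =>
    induction w using FreeMonoid.inductionOn' with
    | one => intro x y h; simpa using h
    | of_mul i w ih =>
      intro x y h
      rw [map_mul, mul_assoc, mul_assoc] at h
      exact ih _ _ (cancel_s (i := i) h)

lemma pow_div {i j : Fin m} (d : ℕ) : ∀ z : BM m, s j ^ d = s i * z → i = j := by
  induction d with
  | zero =>
    intro z h
    have := congrArg ln h
    simp at this
    omega
  | succ d ih =>
    intro z h
    rw [pow_succ'] at h
    rcases garside h with ⟨h, _⟩ | ⟨_, t, h, _⟩ | ⟨_, t, h, _⟩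
    · exact h.symm
    · exact ih _ h
    · exact ih _ h

lemma adj_div {k j : Fin m} (h : Adj k j) (c : ℕ) : ∀ a b : BM m,
    s j ^ (c + 1) * a = s k * b → ∃ t, a = s k * (s j * t) := by
  induction c with
  | zero =>
    intro a b e
    rw [zero_add, pow_one] at e
    obtain ⟨t, ht, _⟩ := (garside e).adj h.symm
    exact ⟨t, ht⟩
  | succ c ih =>
    intro a b e
    rw [pow_succ', mul_assoc] at e
    obtain ⟨t, ht, _⟩ := (garside e).adj h.symm
    exact ih _ _ ht

lemma pow_braid {k j : Fin m} (h : Adj k j) (c : ℕ) :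
    s j ^ c * (s k * s j) = (s k * s j) * s k ^ c := by
  have : SemiconjBy (s k * s j) (s k) (s j) := by
    unfold SemiconjBy
    rw [mul_assoc, braid0 h]
  exact (this.pow_right c).symm

lemma pos_main (c : ℕ) (N : ℕ) : ∀ (a : BM m) (i j : Fin m), ln a ≤ N →
    a * s i ^ (c + 1) = s j ^ (c + 1) * a → a * s i = s j * a := by
  induction N with
  | zero =>
    intro a i j hl h
    rcases exists_cons a with rfl | ⟨k, a, rfl⟩
    · rw [one_mul, mul_one, pow_succ' (s j)] at h
      rw [pow_div _ _ h, one_mul, mul_one]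
    · simp at hl
  | succ N ih =>
    intro a i j hl h
    rcases exists_cons a with rfl | ⟨k, a, rfl⟩
    · rw [one_mul, mul_one, pow_succ' (s j)] at h
      rw [pow_div _ _ h, one_mul, mul_one]
    · simp at hl
      rcases tri k j with rfl | f | f
      · rw [← mul_assoc (s k ^ (c + 1)), ← pow_succ, pow_succ' (s k), mul_assoc, mul_assoc] at h
        rw [mul_assoc, ih a i k (by omega) (cancel_s h)]
      · have hc : Commute (s j) (s k) := comm0 f.symm
        rw [← mul_assoc, (hc.pow_left _).eq, mul_assoc, mul_assoc] at h
        rw [mul_assoc, ih a i j (by omega) (cancel_s h), comm1 f]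
      · obtain ⟨t, ht⟩ := adj_div f c (s k * a) (a * s i ^ (c + 1)) (by rw [← h, mul_assoc])
        have ht := cancel_s ht
        subst ht
        have e : s k * (s j * t) = (s k * s j) * t := by rw [mul_assoc]
        rw [e, ← mul_assoc, pow_braid f, mul_assoc, mul_assoc (s k * s j)] at h
        simp at hl
        have h2 := ih t i k (by omega) (cancel _ _ _ h)
        rw [e, mul_assoc, h2, mul_assoc, braid1 f, mul_assoc]

/-- natural-indexed generators -/
def t (m : ℕ) (i : ℕ) : BM m := if h : i < m then s ⟨i, h⟩ else 1

lemma t_of_lt {i : ℕ} (h : i < m) : t m i = s ⟨i, h⟩ := by simp [t, h]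

lemma t_comm {i j : ℕ} (h : i + 1 < j) : Commute (t m i) (t m j) := by
  by_cases hj : j < m
  · rw [t_of_lt hj, t_of_lt (show i < m by omega)]
    exact comm0 (Or.inl h)
  · have : t m j = 1 := by simp [t, hj]
    rw [this]; exact Commute.one_right _

lemma t_braid {i : ℕ} (h : i + 1 < m) :
    t m i * (t m (i + 1) * t m i) = t m (i + 1) * (t m i * t m (i + 1)) := by
  rw [t_of_lt h, t_of_lt (show i < m by omega)]
  exact braid0 (Or.inl rfl)

/-- partial products -/
def P (m : ℕ) : ℕ → BM m
  | 0 => 1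
  | k + 1 => P m k * t m k

/-- shifted partial products -/
def Q (m : ℕ) : ℕ → BM m
  | 0 => 1
  | k + 1 => Q m k * t m (k + 1)

lemma P_succ_eq (k : ℕ) : P m (k + 1) = t m 0 * Q m k := by
  induction k with
  | zero => simp [P, Q]
  | succ k ih => rw [P, ih, Q, mul_assoc]

lemma P_comm {k j : ℕ} (h : k < j) : Commute (P m k) (t m j) := by
  induction k with
  | zero => exact Commute.one_left _
  | succ k ih => exact (ih (by omega)).mul_left (t_comm h)

lemma P_shift {i k : ℕ} (h : i + 2 ≤ k) (hk : k ≤ m) :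
    SemiconjBy (P m k) (t m i) (t m (i + 1)) := by
  induction k, h using Nat.le_induction with
  | base =>
    unfold SemiconjBy
    have hc : Commute (P m i) (t m (i + 1)) := P_comm (by omega)
    simp only [P]
    calc P m i * t m i * t m (i + 1) * t m i = P m i * (t m i * (t m (i + 1) * t m i)) := by
          simp only [mul_assoc]
      _ = P m i * t m (i + 1) * (t m i * t m (i + 1)) := by rw [t_braid (by omega), mul_assoc]
      _ = _ := by rw [hc.eq]; simp only [mul_assoc]
  | succ k hk' ih =>
    exact (ih (by omega)).mul_left (t_comm (i := i) (j := k) (by omega)).symm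

lemma delta_PQ {k : ℕ} (h : k < m) : SemiconjBy (P m m) (P m k) (Q m k) := by
  induction k with
  | zero => exact SemiconjBy.one_right _
  | succ k ih => exact (ih (by omega)).mul_right (P_shift (by omega) le_rfl)

lemma delta_sq (p : ℕ) :
    SemiconjBy (P (p + 1) (p + 1) ^ 2) (t (p + 1) p) (t (p + 1) 0) := by
  have h := (delta_PQ (m := p + 1) (k := p) (by omega)).eq
  have e1 : P (p + 1) (p + 1) = P (p + 1) p * t (p + 1) p := rfl
  have e2 := P_succ_eq (m := p + 1) p
  unfold SemiconjBy
  generalize P (p + 1) (p + 1) = D at *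
  symm
  calc t (p + 1) 0 * D ^ 2 = t (p + 1) 0 * (D * D) := by rw [pow_two]
    _ = t (p + 1) 0 * (D * P (p + 1) p) * t (p + 1) p := by
        nth_rewrite 2 [e1]; simp only [mul_assoc]
    _ = D ^ 2 * t (p + 1) p := by
        rw [h, ← mul_assoc (t (p + 1) 0), ← e2, pow_two]

lemma delta_pow {i k : ℕ} (h : i + k < m) : SemiconjBy (P m m ^ k) (t m i) (t m (i + k)) := by
  induction k with
  | zero => simp
  | succ k ih =>
    rw [pow_succ']
    exact SemiconjBy.mul_left (P_shift (i := i + k) (by omega) le_rfl) (ih (by omega))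

/-- central element -/
def Z (m : ℕ) : BM m := P m m ^ (m + 1)

lemma Z_t {i : ℕ} (h : i < m) : Commute (Z m) (t m i) := by
  obtain ⟨p, rfl⟩ : ∃ p, m = p + 1 := ⟨m - 1, by omega⟩
  have e : p + 1 + 1 = i + (2 + (p - i)) := by omega
  have h1 := delta_pow (m := p + 1) (i := i) (k := p - i) (by omega)
  have h3 := delta_pow (m := p + 1) (i := 0) (k := i) (by omega)
  rw [show i + (p - i) = p by omega] at h1
  rw [zero_add] at h3
  unfold Z
  have := h3.mul_left ((delta_sq p).mul_left h1)
  rw [← pow_add, ← pow_add, ← e] at this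
  exact this

lemma Z_comm (x : BM m) : Commute (Z m) x := by
  induction x using PresentedMonoid.inductionOn with
  | _ w =>
    induction w using FreeMonoid.inductionOn' with
    | one => exact Commute.one_right _
    | of_mul i w ih =>
      rw [map_mul]
      refine Commute.mul_right ?_ ih
      have := Z_t i.2
      rw [t_of_lt i.2] at this
      exact this

lemma Z_div (i : Fin m) : ∃ r, s i * r = Z m := by
  obtain ⟨p, rfl⟩ : ∃ p, m = p + 1 := ⟨m - 1, by have := i.2; omega⟩
  have h3 := (delta_pow (m := p + 1) (i := 0) (k := i) (by omega)).eq
  rw [zero_add, t_of_lt i.2] at h3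
  refine ⟨P (p + 1) (p + 1) ^ (i : ℕ) * (Q (p + 1) p * P (p + 1) (p + 1) ^ (p + 1 - i)), ?_⟩
  rw [← mul_assoc, ← h3, mul_assoc, ← mul_assoc (t (p + 1) 0), ← P_succ_eq, ← pow_succ', ← pow_add,
    Z]
  congr 1
  omega

lemma Z_div' (i : Fin m) {r : BM m} (h : s i * r = Z m) : r * s i = Z m := by
  apply cancel_s (i := i)
  rw [← mul_assoc, h, (Z_comm (s i)).eq]

noncomputable instance oreZ : OreLocalization.OreSet (Submonoid.powers (Z m)) where
  ore_right_cancel r₁ r₂ z h := by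
    obtain ⟨_, k, rfl⟩ := z
    refine ⟨⟨_, k, rfl⟩, ?_⟩
    have h1 := ((Z_comm r₁).pow_left k).eq
    have h2 := ((Z_comm r₂).pow_left k).eq
    simp only at h ⊢
    rw [h1, h2, h]
  oreNum r _ := r
  oreDenom _ z := z
  ore_eq r z := by
    obtain ⟨_, k, rfl⟩ := z
    exact ((Z_comm r).pow_left k).eq

/-- localization of the monoid at the central element -/
abbrev Loc (m : ℕ) := OreLocalization (Submonoid.powers (Z m)) (BM m)

/-- canonical map -/
noncomputable def loc : BM m →* Loc m := OreLocalization.numeratorHom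

lemma loc_inj : Function.Injective (loc : BM m → Loc m) := by
  intro x y h
  unfold loc at h
  rw [OreLocalization.numeratorHom_apply, OreLocalization.numeratorHom_apply,
    OreLocalization.oreDiv_eq_iff] at h
  obtain ⟨u, v, h1, h2⟩ := h
  simp only [OneMemClass.coe_one, mul_one] at h2
  subst h2
  exact (cancel (u : BM m) _ _ h1).symm

lemma loc_unit (i : Fin m) : IsUnit (loc (s i)) := by
  obtain ⟨r, hr⟩ := Z_div i
  have hZ : IsUnit (loc (Z m)) :=
    OreLocalization.numerator_isUnit (⟨Z m, Submonoid.mem_powers _⟩ : Submonoid.powers (Z m))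
  have h1 : loc (s i) * loc r = loc (Z m) := by rw [← map_mul, hr]
  have h2 : loc r * loc (s i) = loc (Z m) := by rw [← map_mul, Z_div' i hr]
  have hc : Commute (loc (s i)) (loc r) := h1.trans h2.symm
  exact (hc.isUnit_mul_iff.1 (h1 ▸ hZ)).1

/-- map from the group to the units of the localization -/
noncomputable def psi (m : ℕ) : PresentedGroup (braidRels m) →* (Loc m)ˣ :=
  PresentedGroup.toGroup (f := fun i => (loc_unit i).unit) (by
    intro r hr
    rcases hr with ⟨i, j, h, rfl⟩ | ⟨i, j, h, rfl⟩
    · simp only [map_mul, map_inv, FreeGroup.lift_apply_of]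
      rw [mul_inv_eq_one, mul_inv_eq_iff_eq_mul]
      ext
      simp only [Units.val_mul, IsUnit.unit_spec]
      rw [← map_mul, ← map_mul, comm0 (Or.inl h)]
    · simp only [map_mul, map_inv, FreeGroup.lift_apply_of]
      rw [mul_inv_eq_one]
      ext
      simp only [Units.val_mul, IsUnit.unit_spec]
      rw [← map_mul, ← map_mul, ← map_mul, ← map_mul, mul_assoc, mul_assoc, braid0 (Or.inl h)])

/-- map from the monoid to the group -/
def phi (m : ℕ) : BM m →* PresentedGroup (braidRels m) :=
  PresentedMonoid.lift (fun i => PresentedGroup.of i) (by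
    intro a b h
    cases h with
    | comm i j h =>
      have : PresentedGroup.mk (braidRels m) _ = 1 :=
        PresentedGroup.one_of_mem (Or.inl ⟨i, j, h, rfl⟩)
      simp only [map_mul, map_inv] at this
      rw [mul_inv_eq_one, mul_inv_eq_iff_eq_mul] at this
      simpa [PresentedGroup.of] using this
    | braid i j h =>
      have : PresentedGroup.mk (braidRels m) _ = 1 :=
        PresentedGroup.one_of_mem (Or.inr ⟨i, j, h, rfl⟩)
      simp only [map_mul, map_inv] at this
      rw [mul_inv_eq_one] at this
      simpa [mul_assoc, PresentedGroup.of] using this)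

lemma phi_s (i : Fin m) : phi m (s i) = PresentedGroup.of i := PresentedMonoid.lift_of _ _

lemma psi_phi (x : BM m) : ((psi m (phi m x) : (Loc m)ˣ) : Loc m) = loc x := by
  induction x using PresentedMonoid.inductionOn with
  | _ w =>
    induction w using FreeMonoid.inductionOn' with
    | one => simp
    | of_mul i w ih =>
      rw [map_mul, map_mul, map_mul, Units.val_mul, ih, map_mul]
      congr 1
      change ((psi m (phi m (s i)) : (Loc m)ˣ) : Loc m) = loc (s i)
      rw [phi_s, psi, PresentedGroup.toGroup.of]
      rfl

lemma phi_inj : Function.Injective (phi m) := by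
  intro x y h
  apply loc_inj
  rw [← psi_phi, ← psi_phi, h]

lemma group_rep (g : PresentedGroup (braidRels m)) :
    Commute (phi m (Z m)) g ∧ ∃ (a : BM m) (N : ℕ), g * phi m (Z m) ^ N = phi m a := by
  induction g using PresentedGroup.induction_on with
  | _ w =>
    induction w using FreeGroup.induction_on with
    | C1 => exact ⟨by simp, 1, 0, by simp⟩
    | of i =>
      refine ⟨?_, s i, 0, ?_⟩
      · exact (Z_comm (s i)).map (phi m)
      · rw [pow_zero, mul_one, phi_s]; rfl
    | inv_of i ih =>
      rw [map_inv]
      refine ⟨ih.1.inv_right, ?_⟩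
      obtain ⟨r, hr⟩ := Z_div i
      refine ⟨r, 1, ?_⟩
      rw [pow_one, inv_mul_eq_iff_eq_mul, ← hr, map_mul]
      rfl
    | mul x y hx hy =>
      rw [map_mul]
      refine ⟨hx.1.mul_right hy.1, ?_⟩
      obtain ⟨a, N, ha⟩ := hx.2
      obtain ⟨b, K, hb⟩ := hy.2
      refine ⟨a * b, N + K, ?_⟩
      have := (hy.1.pow_left N).eq
      rw [map_mul, ← ha, ← hb, pow_add]
      simp only [mul_assoc]
      rw [← mul_assoc (phi m (Z m) ^ N), this]
      simp only [mul_assoc]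

lemma group_main (g : PresentedGroup (braidRels m)) (k : Fin m) (c : ℕ)
    (h : g * (PresentedGroup.of k) ^ (c + 1) = (PresentedGroup.of k) ^ (c + 1) * g) :
    g * PresentedGroup.of k = PresentedGroup.of k * g := by
  obtain ⟨_, a, N, ha⟩ := group_rep g
  have hz (x : PresentedGroup (braidRels m)) := ((group_rep x).1.pow_left N).eq
  have h1 : a * s k ^ (c + 1) = s k ^ (c + 1) * a := by
    apply phi_inj
    rw [map_mul, map_mul, map_pow, phi_s, ← ha, mul_assoc, hz, ← mul_assoc, h, mul_assoc]
  have h2 := congrArg (phi m) (pos_main c _ a k k le_rfl h1)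
  rw [map_mul, map_mul, phi_s, ← ha, mul_assoc, hz, ← mul_assoc, ← mul_assoc] at h2
  exact mul_right_cancel h2

end BraidAux

/-- For any Artin generator `σ_k` of `B_n` and any nonzero integer `c`, the
centralizer of `σ_k` equals the centralizer of `σ_k ^ c`. -/
theorem centralizer_gen_eq_centralizer_zpow (n : ℕ) (hn : 2 ≤ n)
    (k : Fin (n - 1)) (c : ℤ) (hc : c ≠ 0) :
    Subgroup.centralizer {σ (n := n) k} =
      Subgroup.centralizer {(σ (n := n) k) ^ c} := by
  ext g
  rw [Subgroup.mem_centralizer_singleton_iff, Subgroup.mem_centralizer_singleton_iff]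
  constructor
  · intro h
    have h' : Commute g (σ k) := h
    exact h'.zpow_right c
  · intro h
    have h' : Commute g (σ k ^ c) := h
    obtain ⟨d, hd⟩ : ∃ d : ℕ, c.natAbs = d + 1 := ⟨c.natAbs - 1, by omega⟩
    have h2 : Commute g (σ k ^ (d + 1)) := by
      rcases Int.natAbs_eq c with e | e
      · rw [e, hd, zpow_natCast] at h'
        exact h'
      · rw [e, hd, zpow_neg, zpow_natCast] at h'
        exact Commute.inv_right_iff.1 h'
    exact BraidAux.group_main g k d h2
end

section
/- Uniqueness of the conjugating power of a generator: let σ_i be an Artin generator of B_n and let a ∈ B_n be an element that does not commute with σ_i. If integers j and q satisfy σ_i^(−j) a σ_i^j = σ_i^(−q) a σ_i^q, then j = q. -/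
namespace BraidPos

def Far {m : ℕ} (i j : Fin m) : Prop := (i : ℕ) + 1 < j ∨ (j : ℕ) + 1 < i
def Adj {m : ℕ} (i j : Fin m) : Prop := (i : ℕ) + 1 = j ∨ (j : ℕ) + 1 = i

theorem Far.symm {m : ℕ} {i j : Fin m} (h : Far i j) : Far j i := Or.symm h
theorem Adj.symm {m : ℕ} {i j : Fin m} (h : Adj i j) : Adj j i := Or.symm h

theorem tri {m : ℕ} (i j : Fin m) : i = j ∨ Far i j ∨ Adj i j := by
  unfold Far Adj
  rw [Fin.ext_iff]
  omega

inductive PRel (m : ℕ) : FreeMonoid (Fin m) → FreeMonoid (Fin m) → Prop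
  | far (i j : Fin m) (h : Far i j) :
      PRel m (FreeMonoid.of i * FreeMonoid.of j) (FreeMonoid.of j * FreeMonoid.of i)
  | adj (i j : Fin m) (h : Adj i j) :
      PRel m (FreeMonoid.of i * (FreeMonoid.of j * FreeMonoid.of i))
        (FreeMonoid.of j * (FreeMonoid.of i * FreeMonoid.of j))

/-- The positive braid monoid. -/
abbrev BM (m : ℕ) : Type := PresentedMonoid (PRel m)

def s {m : ℕ} (i : Fin m) : BM m := PresentedMonoid.of (PRel m) i

theorem sFar' {m : ℕ} {i j : Fin m} (h : Far i j) : s i * s j = s j * s i :=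
  PresentedMonoid.mk_eq_mk_of_rel (PRel.far i j h)

theorem sAdj' {m : ℕ} {i j : Fin m} (h : Adj i j) :
    s i * (s j * s i) = s j * (s i * s j) :=
  PresentedMonoid.mk_eq_mk_of_rel (PRel.adj i j h)

theorem sFar {m : ℕ} {i j : Fin m} (h : Far i j) (Z : BM m) :
    s i * (s j * Z) = s j * (s i * Z) := by
  rw [← mul_assoc, sFar' h, mul_assoc]

theorem sAdj {m : ℕ} {i j : Fin m} (h : Adj i j) (Z : BM m) :
    s i * (s j * (s i * Z)) = s j * (s i * (s j * Z)) := by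
  have := congrArg (· * Z) (sAdj' h)
  simpa [mul_assoc] using this

/-- Length homomorphism. -/
def lenHom (m : ℕ) : BM m →* Multiplicative ℕ :=
  PresentedMonoid.lift (fun _ => Multiplicative.ofAdd 1) (by
    intro a b h
    cases h <;> simp)

def len {m : ℕ} (x : BM m) : ℕ := (lenHom m x).toAdd

theorem len_mul {m : ℕ} (x y : BM m) : len (x * y) = len x + len y := by
  simp [len]

theorem len_one {m : ℕ} : len (1 : BM m) = 0 := by simp [len]

theorem len_s {m : ℕ} (i : Fin m) : len (s i) = 1 := by
  simp [len, lenHom, s]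

/-- The conclusion of Garside's key lemma. -/
def R {m : ℕ} (i : Fin m) (X : BM m) (j : Fin m) (Y : BM m) : Prop :=
  (i = j ∧ X = Y) ∨ (Far i j ∧ ∃ Z, X = s j * Z ∧ Y = s i * Z) ∨
    (Adj i j ∧ ∃ Z, X = s j * (s i * Z) ∧ Y = s i * (s j * Z))

theorem R.symm {m : ℕ} {i j : Fin m} {X Y : BM m} (h : R i X j Y) : R j Y i X := by
  rcases h with ⟨h, e⟩ | ⟨h, Z, e, e'⟩ | ⟨h, Z, e, e'⟩
  · exact Or.inl ⟨h.symm, e.symm⟩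
  · exact Or.inr (Or.inl ⟨h.symm, Z, e', e⟩)
  · exact Or.inr (Or.inr ⟨h.symm, Z, e', e⟩)

theorem R.mul {m : ℕ} {i j : Fin m} {X Y : BM m} (h : R i X j Y) (c : BM m) :
    R i (X * c) j (Y * c) := by
  rcases h with ⟨h, e⟩ | ⟨h, Z, e, e'⟩ | ⟨h, Z, e, e'⟩
  · exact Or.inl ⟨h, by rw [e]⟩
  · exact Or.inr (Or.inl ⟨h, Z * c, by rw [e, mul_assoc], by rw [e', mul_assoc]⟩)
  · exact Or.inr (Or.inr ⟨h, Z * c, by simp [e, mul_assoc], by simp [e', mul_assoc]⟩)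

theorem Far.ne {m : ℕ} {i : Fin m} (h : Far i i) : False := by unfold Far at h; omega
theorem Adj.ne {m : ℕ} {i : Fin m} (h : Adj i i) : False := by unfold Adj at h; omega
theorem Far.not {m : ℕ} {i j : Fin m} (h : Far i j) (h' : Adj i j) : False := by
  unfold Far at h; unfold Adj at h'; omega

theorem R.same {m : ℕ} {i : Fin m} {X Y : BM m} (h : R i X i Y) : X = Y := by
  rcases h with ⟨h, e⟩ | ⟨h, _⟩ | ⟨h, _⟩
  · exact e
  · exact h.ne.elim
  · exact h.ne.elim

theorem R.far {m : ℕ} {i j : Fin m} {X Y : BM m} (h : R i X j Y) (hf : Far i j) :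
    ∃ Z, X = s j * Z ∧ Y = s i * Z := by
  rcases h with ⟨h, e⟩ | ⟨h, e⟩ | ⟨h, _⟩
  · subst h; exact hf.ne.elim
  · exact e
  · exact (hf.not h).elim

theorem R.adj {m : ℕ} {i j : Fin m} {X Y : BM m} (h : R i X j Y) (hf : Adj i j) :
    ∃ Z, X = s j * (s i * Z) ∧ Y = s i * (s j * Z) := by
  rcases h with ⟨h, e⟩ | ⟨h, e⟩ | ⟨h, e⟩
  · subst h; exact hf.ne.elim
  · exact (h.not hf).elim
  · exact e

def H (m L : ℕ) : Prop :=
  ∀ (i j : Fin m) (X Y : BM m), len X < L → s i * X = s j * Y → R i X j Y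

theorem caseFF {m L : ℕ} (hH : H m L) {i k j : Fin m} {W Z Z' : BM m} (hW : len W ≤ L)
    (hik : Far i k) (hkj : Far k j) (e : W = s i * Z) (e' : W = s j * Z') :
    R i (s k * Z) j (s k * Z') := by
  have l1 : len Z < L := by rw [e, len_mul, len_s] at hW; omega
  have h := hH i j Z Z' l1 (e.symm.trans e')
  rcases h with ⟨h, e⟩ | ⟨h, V, rfl, rfl⟩ | ⟨h, V, rfl, rfl⟩
  · exact Or.inl ⟨h, by rw [e]⟩
  · refine Or.inr (Or.inl ⟨h, s k * V, ?_, ?_⟩)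
    · rw [sFar hkj]
    · rw [sFar hik]
  · refine Or.inr (Or.inr ⟨h, s k * V, ?_, ?_⟩)
    · rw [sFar hkj, sFar hik]
    · rw [sFar hik.symm, sFar hkj]

theorem caseFA {m L : ℕ} (hH : H m L) {i k j : Fin m} {W Z Z' : BM m} (hW : len W ≤ L)
    (hik : Far i k) (hkj : Adj k j) (e : W = s i * Z) (e' : W = s j * (s k * Z')) :
    R i (s k * Z) j (s k * (s j * Z')) := by
  have l1 : len Z < L := by rw [e, len_mul, len_s] at hW; omega
  have l2 : len (s k * Z') < L := by rw [e', len_mul, len_s] at hW; omega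
  have h := hH i j Z _ l1 (e.symm.trans e')
  rcases tri i j with hij | hij | hij
  · subst hij
    exact (hik.not hkj.symm).elim
  · obtain ⟨V, rfl, e2⟩ := h.far hij
    have h2 := hH _ _ _ _ (by rw [len_mul] at l2; omega) e2
    obtain ⟨U, rfl, rfl⟩ := h2.far hik.symm
    refine Or.inr (Or.inl ⟨hij, s k * (s j * U), ?_, ?_⟩)
    · rw [sAdj hkj]
    · rw [sFar hij.symm, sFar hik]
  · obtain ⟨V, rfl, e2⟩ := h.adj hij
    have h2 := hH _ _ _ _ (by rw [len_mul] at l2; omega) e2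
    obtain ⟨U, rfl, e3⟩ := h2.far hik.symm
    have h3 := hH _ _ _ _ (by simp only [len_mul, len_s] at l1; omega) e3
    obtain ⟨T, rfl, rfl⟩ := h3.adj hkj.symm
    refine Or.inr (Or.inr ⟨hij, s k * (s j * (s i * T)), ?_, ?_⟩)
    · rw [sFar hik (s j * T), sAdj hkj, sAdj hij.symm, sFar hik.symm]
    · rw [sAdj hij.symm, sFar hik.symm, sFar hik T, sAdj hkj]

theorem caseAA {m L : ℕ} (hH : H m L) {i k j : Fin m} {W Z Z' : BM m} (hW : len W ≤ L)
    (hik : Adj i k) (hkj : Adj k j) (e : W = s i * (s k * Z)) (e' : W = s j * (s k * Z')) :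
    R i (s k * (s i * Z)) j (s k * (s j * Z')) := by
  have l1 : len (s k * Z) < L := by rw [e, len_mul, len_s] at hW; omega
  have l2 : len (s k * Z') < L := by rw [e', len_mul, len_s] at hW; omega
  have h := hH i j _ _ l1 (e.symm.trans e')
  rcases tri i j with hij | hij | hij
  · subst hij
    have h2 := hH _ _ _ _ (by rw [len_mul] at l1; omega) h.same
    rw [h2.same]
    exact Or.inl ⟨rfl, rfl⟩
  · obtain ⟨V, e1, e2⟩ := h.far hij
    have h1 := hH _ _ _ _ (by rw [len_mul] at l1; omega) e1
    have h2 := hH _ _ _ _ (by rw [len_mul] at l2; omega) e2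
    obtain ⟨U, rfl, e3⟩ := h1.adj hkj
    obtain ⟨U', rfl, e4⟩ := h2.adj hik.symm
    have e5 := e3.symm.trans e4
    have h5 := hH _ _ _ _ (by simp only [len_mul, len_s] at l1 ⊢; omega) e5
    have e6 := h5.same
    have h6 := hH _ _ _ _ (by simp only [len_mul, len_s] at l1 ⊢; omega) e6
    obtain ⟨T, rfl, rfl⟩ := h6.far hij.symm
    refine Or.inr (Or.inl ⟨hij, s k * (s j * (s i * (s k * T))), ?_, ?_⟩)
    · rw [sFar hij, sAdj hik, sAdj hkj]
    · rw [sFar hij.symm, sAdj hkj.symm, sAdj hik.symm, sFar hij.symm]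
  · exfalso
    unfold Adj at *
    omega

theorem R.trans {m L : ℕ} (hH : H m L) {i k j : Fin m} {X W Y : BM m} (hW : len W ≤ L)
    (h1 : R i X k W) (h2 : R k W j Y) : R i X j Y := by
  rcases h1 with ⟨rfl, rfl⟩ | ⟨h, Z, e, e'⟩ | ⟨h, Z, e, e'⟩
  · exact h2
  · rcases h2 with ⟨rfl, rfl⟩ | ⟨h', Z', e2, e2'⟩ | ⟨h', Z', e2, e2'⟩
    · exact Or.inr (Or.inl ⟨h, Z, e, e'⟩)
    · rw [e, e2']; exact caseFF hH hW h h' e' e2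
    · rw [e, e2']; exact caseFA hH hW h h' e' e2
  · rcases h2 with ⟨rfl, rfl⟩ | ⟨h', Z', e2, e2'⟩ | ⟨h', Z', e2, e2'⟩
    · exact Or.inr (Or.inr ⟨h, Z, e, e'⟩)
    · rw [e, e2']; exact (caseFA hH hW h'.symm h.symm e2 e').symm
    · rw [e, e2']; exact caseAA hH hW h h' e' e2

abbrev mk' (m : ℕ) : FreeMonoid (Fin m) →* BM m := PresentedMonoid.mk (PRel m)

def P {m : ℕ} (u v : FreeMonoid (Fin m)) : Prop :=
  (u = 1 ∧ v = 1) ∨ ∃ i X j Y, u = FreeMonoid.of i * X ∧ v = FreeMonoid.of j * Y ∧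
    R i (mk' m X) j (mk' m Y)

theorem len_word {m : ℕ} (i : Fin m) (X : FreeMonoid (Fin m)) :
    len (mk' m (FreeMonoid.of i * X)) = len (mk' m X) + 1 := by
  rw [map_mul, len_mul, add_comm]
  congr 1

theorem of_mul_inj {m : ℕ} {i j : Fin m} {X Y : FreeMonoid (Fin m)}
    (h : FreeMonoid.of i * X = FreeMonoid.of j * Y) : i = j ∧ X = Y := by
  have : i :: FreeMonoid.toList X = j :: FreeMonoid.toList Y := congrArg FreeMonoid.toList h
  simpa using this

theorem word_cases {m : ℕ} (u : FreeMonoid (Fin m)) : u = 1 ∨ ∃ i X, u = FreeMonoid.of i * X := by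
  induction u using FreeMonoid.casesOn with
  | one => exact Or.inl rfl
  | of_mul x xs => exact Or.inr ⟨x, xs, rfl⟩

theorem P_of_rel {m L : ℕ} (hH : H m L) {u v : FreeMonoid (Fin m)}
    (h : ConGen.Rel (PRel m) u v) (hl : len (mk' m u) ≤ L + 1) : P u v := by
  induction h with
  | of u v h =>
    cases h with
    | far i j h =>
      exact Or.inr ⟨i, _, j, _, rfl, rfl, Or.inr (Or.inl ⟨h, 1, (mul_one _).symm, (mul_one _).symm⟩)⟩
    | adj i j h =>
      refine Or.inr ⟨i, _, j, _, rfl, rfl, Or.inr (Or.inr ⟨h, 1, ?_, ?_⟩)⟩ <;>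
      · rw [mul_one]; rfl
  | refl u =>
    rcases word_cases u with rfl | ⟨i, X, rfl⟩
    · exact Or.inl ⟨rfl, rfl⟩
    · exact Or.inr ⟨i, X, i, X, rfl, rfl, Or.inl ⟨rfl, rfl⟩⟩
  | symm h ih =>
    have e := PresentedMonoid.mk_eq_mk_iff.2 h
    rcases ih (by rw [mk', e]; exact hl) with ⟨h1, h2⟩ | ⟨i, X, j, Y, h1, h2, h3⟩
    · exact Or.inl ⟨h2, h1⟩
    · exact Or.inr ⟨j, Y, i, X, h2, h1, h3.symm⟩
  | trans h h' ih ih' =>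
    have e := PresentedMonoid.mk_eq_mk_iff.2 h
    have hl' := hl
    rw [mk', e] at hl'
    rcases ih hl with ⟨h1, h2⟩ | ⟨i, X, j, Y, h1, h2, h3⟩
    · rcases ih' hl' with ⟨h1', h2'⟩ | ⟨i', X', j', Y', h1', h2', h3'⟩
      · exact Or.inl ⟨h1, h2'⟩
      · exfalso
        rw [h1', len_word] at hl'
        have := congrArg (fun w => len (mk' m w)) (h2.symm.trans h1')
        simp only [len_word, map_one, len_one] at this
        omega
    · rcases ih' hl' with ⟨h1', h2'⟩ | ⟨i', X', j', Y', h1', h2', h3'⟩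
      · exfalso
        have := congrArg (fun w => len (mk' m w)) (h1'.symm.trans h2)
        simp only [len_word, map_one, len_one] at this
        omega
      · obtain ⟨rfl, rfl⟩ := of_mul_inj (h2.symm.trans h1')
        rw [h2, len_word] at hl'
        exact Or.inr ⟨i, X, j', Y', h1, h2', R.trans hH (by omega) h3 h3'⟩
  | mul h h' ih ih' =>
    have e' := PresentedMonoid.mk_eq_mk_iff.2 h'
    rw [map_mul, len_mul] at hl
    rcases ih (by omega) with ⟨h1, h2⟩ | ⟨i, X, j, Y, h1, h2, h3⟩
    · rw [h1, h2, one_mul, one_mul]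
      exact ih' (by omega)
    · refine Or.inr ⟨i, _, j, _, by rw [h1, mul_assoc], by rw [h2, mul_assoc], ?_⟩
      rw [map_mul, map_mul, mk', e']
      exact h3.mul _

theorem H_all (m L : ℕ) : H m L := by
  induction L with
  | zero => intro i j X Y h; omega
  | succ L ih =>
    intro i j X Y hl e
    obtain ⟨X, rfl⟩ := PresentedMonoid.surjective_mk X
    obtain ⟨Y, rfl⟩ := PresentedMonoid.surjective_mk Y
    have h : ConGen.Rel (PRel m) (FreeMonoid.of i * X) (FreeMonoid.of j * Y) :=
      PresentedMonoid.mk_eq_mk_iff.1 e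
    rcases P_of_rel ih h (by rw [len_word]; exact hl) with ⟨h1, h2⟩ | ⟨i', X', j', Y', h1, h2, h3⟩
    · exfalso
      have := congrArg (fun w => len (mk' m w)) h1
      simp only [len_word, map_one, len_one] at this
      omega
    · obtain ⟨rfl, rfl⟩ := of_mul_inj h1
      obtain ⟨rfl, rfl⟩ := of_mul_inj h2
      exact h3

/-- Garside's key lemma. -/
theorem key {m : ℕ} {i j : Fin m} {X Y : BM m} (h : s i * X = s j * Y) : R i X j Y :=
  H_all m (len X + 1) i j X Y (Nat.lt_succ_self _) h

theorem BM_ind {m : ℕ} {p : BM m → Prop} (x : BM m) (h1 : p 1)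
    (hs : ∀ i x, p x → p (s i * x)) : p x := by
  obtain ⟨x, rfl⟩ := PresentedMonoid.surjective_mk x
  induction x using FreeMonoid.recOn with
  | one => exact h1
  | of_mul i xs h => exact hs i _ h

theorem cancel {m : ℕ} (x : BM m) : ∀ y z : BM m, x * y = x * z → y = z := by
  induction x using BM_ind with
  | h1 => intro y z h; simpa using h
  | hs i x ih =>
    intro y z h
    rw [mul_assoc, mul_assoc] at h
    exact ih _ _ (key h).same

theorem pow_head {m : ℕ} {i t : Fin m} (k : ℕ) : ∀ Y : BM m, s i ^ k = s t * Y → i = t := by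
  induction k with
  | zero =>
    intro Y h
    have := congrArg len h
    rw [pow_zero, len_one, len_mul, len_s] at this
    omega
  | succ k ih =>
    intro Y h
    rw [pow_succ'] at h
    rcases key h with ⟨h, _⟩ | ⟨_, Z, h, _⟩ | ⟨_, Z, h, _⟩
    · exact h
    · exact ih _ h
    · exact ih _ h

theorem pow_lcm {m : ℕ} {i t : Fin m} (hit : Adj i t) (x : BM m) (k : ℕ) :
    ∀ Y : BM m, s i ^ k * x = s t * (s i * Y) → ∃ Z, x = s t * (s i * Z) := by
  induction k with
  | zero => intro Y h; exact ⟨Y, by simpa using h⟩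
  | succ k ih =>
    intro Y h
    rw [pow_succ', mul_assoc] at h
    obtain ⟨Z, h1, _⟩ := (key h).adj hit
    exact ih _ h1

theorem comm_far {m : ℕ} {i t : Fin m} (h : Far i t) (k : ℕ) (x : BM m) :
    s i ^ k * (s t * x) = s t * (s i ^ k * x) := by
  have : Commute (s i) (s t) := sFar' h
  rw [← mul_assoc, (this.pow_left k).eq, mul_assoc]

theorem conj_adj {m : ℕ} {i t : Fin m} (h : Adj i t) (k : ℕ) (x : BM m) :
    s i ^ k * (s t * (s i * x)) = s t * (s i * (s t ^ k * x)) := by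
  induction k with
  | zero => simp
  | succ k ih => rw [pow_succ', mul_assoc, ih, sAdj h, pow_succ', mul_assoc]

theorem main_pos {m : ℕ} (k L : ℕ) : ∀ (i j : Fin m) (a : BM m), len a ≤ L →
    s i ^ (k + 1) * a = a * s j ^ (k + 1) → s i * a = a * s j := by
  induction L using Nat.strong_induction_on with
  | _ L ih =>
  intro i j a hl h
  have hcase : a = 1 ∨ ∃ t b, a = s t * b := by
    induction a using BM_ind with
    | h1 => exact Or.inl rfl
    | hs t b _ => exact Or.inr ⟨t, b, rfl⟩
  rcases hcase with rfl | ⟨t, b, rfl⟩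
  · rw [mul_one, one_mul, pow_succ' (s j)] at h
    rw [pow_head _ _ h, one_mul, mul_one]
  · rw [len_mul, len_s] at hl
    rcases tri i t with rfl | hit | hit
    · have h' : s i ^ (k + 1) * b = b * s j ^ (k + 1) := by
        apply cancel (s i)
        rw [← mul_assoc, ← mul_assoc, ← h, ← mul_assoc, ← pow_succ', ← pow_succ]
      have h2 := ih (len b) (by omega) i j b le_rfl h'
      rw [mul_assoc, ← h2]
    · rw [comm_far hit, mul_assoc] at h
      have h' := ih (len b) (by omega) i j b le_rfl (cancel _ _ _ h)
      rw [sFar hit, h', mul_assoc]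
    · have h2 := h
      rw [pow_succ', mul_assoc, mul_assoc] at h2
      obtain ⟨Z, h3, _⟩ := (key h2).adj hit
      obtain ⟨c, h4⟩ := pow_lcm hit _ _ _ h3
      have hlc : len (s t * b) = len c + 2 := by
        rw [h4, len_mul, len_mul, len_s, len_s]; omega
      rw [len_mul, len_s] at hlc
      rw [h4] at h ⊢
      rw [conj_adj hit, mul_assoc, mul_assoc] at h
      have h' := ih (len c) (by omega) t j c le_rfl (cancel _ _ _ (cancel _ _ _ h))
      rw [sAdj hit, h', mul_assoc, mul_assoc]

/-! ### A central element divisible by all the generators -/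

def g (m k : ℕ) : BM m := if h : k < m then s ⟨k, h⟩ else 1

theorem g_far {m i j : ℕ} (h : i + 1 < j) : g m i * g m j = g m j * g m i := by
  unfold g
  split_ifs
  · exact sFar' (Or.inl h)
  all_goals simp

theorem g_adj {m i : ℕ} (h : i + 1 < m) :
    g m i * (g m (i + 1) * g m i) = g m (i + 1) * (g m i * g m (i + 1)) := by
  unfold g
  rw [dif_pos h, dif_pos (by omega)]
  exact sAdj' (Or.inl rfl)

def d (m : ℕ) : ℕ → BM m
  | 0 => 1
  | k + 1 => d m k * g m k

theorem d_comm {m : ℕ} (k : ℕ) {j : ℕ} (h : k < j) : d m k * g m j = g m j * d m k := by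
  induction k with
  | zero => simp [d]
  | succ k ih =>
    rw [d, mul_assoc, g_far h, ← mul_assoc, ih (by omega), mul_assoc]

theorem d_shift {m : ℕ} (k : ℕ) {j : ℕ} (h : j + 1 < k) (hk : k ≤ m) :
    d m k * g m j = g m (j + 1) * d m k := by
  induction k with
  | zero => omega
  | succ k ih =>
    rcases Nat.lt_or_ge (j + 1) k with h1 | h1
    · rw [d, mul_assoc, ← g_far h1, ← mul_assoc, ih h1 (by omega), mul_assoc]
    · obtain rfl : k = j + 1 := by omega
      rw [d, d, mul_assoc, mul_assoc, g_adj (by omega), ← mul_assoc, d_comm j (by omega)]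
      simp only [mul_assoc]

/-- `g 1 * ... * g k`. -/
def e (m : ℕ) : ℕ → BM m
  | 0 => 1
  | k + 1 => e m k * g m (k + 1)

theorem d_eq {m : ℕ} (k : ℕ) : d m (k + 1) = g m 0 * e m k := by
  induction k with
  | zero => simp [d, e]
  | succ k ih => rw [d, ih, e, mul_assoc]

theorem d_e {m K : ℕ} (hK : K ≤ m) (k : ℕ) (hk : k + 1 ≤ K) :
    d m K * d m k = e m k * d m K := by
  induction k with
  | zero => simp [d, e]
  | succ k ih =>
    rw [d, ← mul_assoc, ih (by omega), mul_assoc, d_shift K (by omega) hK, e, mul_assoc]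

theorem d_sq {k m : ℕ} (h : k + 1 ≤ m) :
    d m (k + 1) * d m (k + 1) * g m k = g m 0 * (d m (k + 1) * d m (k + 1)) := by
  have h1 : d m (k + 1) * d m (k + 1) = e m k * d m (k + 1) * g m k := by
    rw [← d_e h k le_rfl, mul_assoc, d]
  conv_rhs => rw [h1, ← mul_assoc, ← mul_assoc, ← d_eq]

theorem d_pow_shift {m : ℕ} (p i : ℕ) (h : i + p < m) :
    d m m ^ p * g m i = g m (i + p) * d m m ^ p := by
  induction p with
  | zero => simp
  | succ p ih =>
    rw [pow_succ', mul_assoc, ih (by omega), ← mul_assoc, d_shift m (by omega) le_rfl, mul_assoc,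
      add_assoc]

def c (m : ℕ) : BM m := d m m ^ (m + 1)

theorem c_comm_g {m i : ℕ} (h : i < m) : c m * g m i = g m i * c m := by
  obtain ⟨k, rfl⟩ : ∃ k, m = i + k + 1 := ⟨m - i - 1, by omega⟩
  have h1 := d_pow_shift (m := i + k + 1) k i (by omega)
  have h2 := d_pow_shift (m := i + k + 1) i 0 (by omega)
  have h3 := d_sq (k := i + k) (m := i + k + 1) le_rfl
  have hc : c (i + k + 1) = d (i + k + 1) (i + k + 1) ^ i *
      (d (i + k + 1) (i + k + 1) * d (i + k + 1) (i + k + 1)) *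
        d (i + k + 1) (i + k + 1) ^ k := by
    rw [c, ← pow_two, ← pow_add, ← pow_add]
    congr 1
    omega
  rw [zero_add] at h2
  rw [hc, mul_assoc, h1, mul_assoc, ← mul_assoc _ (g _ _), h3, ← mul_assoc, ← mul_assoc, h2]
  simp only [mul_assoc]

theorem c_div_g {m i : ℕ} (h : i < m) : ∃ u, c m = g m i * u := by
  obtain ⟨k, rfl⟩ : ∃ k, m = i + k + 1 := ⟨m - i - 1, by omega⟩
  have h2 := d_pow_shift (m := i + k + 1) i 0 (by omega)
  rw [zero_add] at h2
  have hc : c (i + k + 1) = d (i + k + 1) (i + k + 1) ^ i *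
      d (i + k + 1) (i + k + 1) * d (i + k + 1) (i + k + 1) ^ (k + 1) := by
    rw [c, ← pow_succ, ← pow_add]
    congr 1
    omega
  refine ⟨d (i + k + 1) (i + k + 1) ^ i * e (i + k + 1) (i + k) *
    d (i + k + 1) (i + k + 1) ^ (k + 1), ?_⟩
  rw [hc, ← mul_assoc, ← mul_assoc, ← h2, mul_assoc _ (g _ 0), ← d_eq]

theorem g_eq {m : ℕ} (i : Fin m) : g m i = s i := by
  rw [g, dif_pos i.2]

theorem c_comm {m : ℕ} (x : BM m) : c m * x = x * c m := by
  induction x using BM_ind with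
  | h1 => simp
  | hs i x ih =>
    rw [mul_assoc, ← ih, ← mul_assoc, ← mul_assoc, ← g_eq, c_comm_g i.2]

theorem c_div {m : ℕ} (i : Fin m) : ∃ u, c m = s i * u ∧ c m = u * s i := by
  obtain ⟨u, hu⟩ := c_div_g i.2
  rw [g_eq] at hu
  refine ⟨u, hu, cancel (s i) _ _ ?_⟩
  rw [← c_comm, ← mul_assoc, ← hu]

/-! ### Embedding in the localisation -/

abbrev S (m : ℕ) : Submonoid (BM m) := Submonoid.powers (c m)

theorem S_comm {m : ℕ} (t : S m) (x : BM m) : (t : BM m) * x = x * t := by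
  obtain ⟨t, N, rfl⟩ := t
  have : Commute (c m) x := c_comm x
  exact (this.pow_left N).eq

instance oreS (m : ℕ) : OreLocalization.OreSet (S m) where
  ore_right_cancel x y t h := ⟨t, by rw [S_comm, S_comm, h]⟩
  oreNum x _ := x
  oreDenom _ t := t
  ore_eq x t := S_comm t x

abbrev Loc (m : ℕ) : Type := OreLocalization (S m) (BM m)

def num (m : ℕ) : BM m →* Loc m := OreLocalization.numeratorHom

theorem num_inj {m : ℕ} {x y : BM m} (h : num m x = num m y) : x = y := by
  have h' : x /ₒ (1 : S m) = y /ₒ (1 : S m) := h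
  rw [OreLocalization.oreDiv_eq_iff] at h'
  obtain ⟨u, v, h1, h2⟩ := h'
  have h3 : (u : BM m) = v := by simpa using h2
  have h4 : (u : BM m) * y = v * x := h1
  rw [← h3] at h4
  exact (cancel _ _ _ h4).symm

theorem num_s_unit {m : ℕ} (i : Fin m) : IsUnit (num m (s i)) := by
  obtain ⟨u, h1, h2⟩ := c_div i
  have hc : IsUnit (num m (c m)) :=
    OreLocalization.numerator_isUnit (⟨c m, Submonoid.mem_powers _⟩ : S m)
  obtain ⟨w, hw⟩ := hc
  have e1 : num m (s i) * num m u = w := by rw [← map_mul, ← h1, hw]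
  have e2 : num m u * num m (s i) = w := by rw [← map_mul, ← h2, hw]
  refine isUnit_iff_exists_and_exists.2 ⟨⟨num m u * ↑w⁻¹, ?_⟩, ⟨↑w⁻¹ * num m u, ?_⟩⟩
  · rw [← mul_assoc, e1, Units.mul_inv]
  · rw [mul_assoc, e2, Units.inv_mul]

noncomputable def us {m : ℕ} (i : Fin m) : (Loc m)ˣ := (num_s_unit i).unit

theorem us_val {m : ℕ} (i : Fin m) : (us i : Loc m) = num m (s i) := rfl

abbrev G (m : ℕ) : Type := PresentedGroup (braidRels m)

noncomputable def toLoc (m : ℕ) : G m →* (Loc m)ˣ :=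
  PresentedGroup.toGroup (f := us) (by
    rintro r (⟨i, j, h, rfl⟩ | ⟨i, j, h, rfl⟩)
    · simp only [map_mul, map_inv, FreeGroup.lift_apply_of]
      rw [mul_inv_eq_one, mul_inv_eq_iff_eq_mul]
      ext
      rw [Units.val_mul, Units.val_mul, us_val, us_val, ← map_mul, ← map_mul, sFar' (Or.inl h)]
    · simp only [map_mul, map_inv, FreeGroup.lift_apply_of]
      rw [mul_inv_eq_one]
      ext
      simp only [Units.val_mul, us_val, ← map_mul]
      rw [mul_assoc, sAdj' (Or.inl h), mul_assoc])

def gen {m : ℕ} (i : Fin m) : G m := PresentedGroup.of i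

theorem gen_far {m : ℕ} {i j : Fin m} (h : (i : ℕ) + 1 < j) : gen i * gen j = gen j * gen i := by
  have : (PresentedGroup.mk (braidRels m)) (FreeGroup.of i * FreeGroup.of j *
      (FreeGroup.of i)⁻¹ * (FreeGroup.of j)⁻¹) = 1 :=
    PresentedGroup.one_of_mem (Or.inl ⟨i, j, h, rfl⟩)
  simp only [map_mul, map_inv] at this
  rw [mul_inv_eq_one, mul_inv_eq_iff_eq_mul] at this
  exact this

theorem gen_adj {m : ℕ} {i j : Fin m} (h : (i : ℕ) + 1 = j) :
    gen i * (gen j * gen i) = gen j * (gen i * gen j) := by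
  have : (PresentedGroup.mk (braidRels m)) (FreeGroup.of i * FreeGroup.of j * FreeGroup.of i *
              (FreeGroup.of j * FreeGroup.of i * FreeGroup.of j)⁻¹) = 1 :=
    PresentedGroup.one_of_mem (Or.inr ⟨i, j, h, rfl⟩)
  rw [map_mul, map_inv, mul_inv_eq_one] at this
  simp only [map_mul, mul_assoc] at this
  exact this

def toG (m : ℕ) : BM m →* G m :=
  PresentedMonoid.lift gen (by
    intro a b h
    cases h with
    | far i j h =>
      simp only [map_mul, FreeMonoid.lift_eval_of]
      rcases h with h | h
      · exact gen_far h
      · exact (gen_far h).symm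
    | adj i j h =>
      simp only [map_mul, FreeMonoid.lift_eval_of]
      rcases h with h | h
      · exact gen_adj h
      · exact (gen_adj h).symm)

theorem toG_s {m : ℕ} (i : Fin m) : toG m (s i) = gen i := rfl

theorem toLoc_toG {m : ℕ} (x : BM m) : (toLoc m (toG m x) : Loc m) = num m x := by
  induction x using BM_ind with
  | h1 => simp
  | hs i x ih =>
    rw [map_mul, map_mul, map_mul, Units.val_mul, ih, toG_s, gen, toLoc, PresentedGroup.toGroup.of,
      us_val]

theorem toG_inj {m : ℕ} {x y : BM m} (h : toG m x = toG m y) : x = y := by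
  apply num_inj
  rw [← toLoc_toG, ← toLoc_toG, h]

theorem G_c_comm {m : ℕ} (a : G m) : Commute (toG m (c m)) a := by
  have : (MulAut.conj (toG m (c m))).toMonoidHom = MonoidHom.id (G m) := by
    apply PresentedGroup.ext
    intro i
    change toG m (c m) * gen i * (toG m (c m))⁻¹ = gen i
    rw [mul_inv_eq_iff_eq_mul, ← toG_s, ← map_mul, ← map_mul, c_comm]
  have h := DFunLike.congr_fun this a
  change toG m (c m) * a * (toG m (c m))⁻¹ = a at h
  rwa [mul_inv_eq_iff_eq_mul] at h

theorem frac {m : ℕ} (a : G m) : ∃ (N : ℕ) (p : BM m), a * toG m (c m) ^ N = toG m p := by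
  obtain ⟨a, rfl⟩ := PresentedGroup.mk_surjective _ a
  induction a using FreeGroup.induction_on with
  | C1 => exact ⟨0, 1, by simp⟩
  | of i => exact ⟨0, s i, by rw [pow_zero, mul_one]; rfl⟩
  | inv_of i _ =>
    obtain ⟨u, hu, _⟩ := c_div i
    refine ⟨1, u, ?_⟩
    rw [pow_one, map_inv, inv_mul_eq_iff_eq_mul, hu, map_mul]
    rfl
  | mul x y hx hy =>
    obtain ⟨N, p, hp⟩ := hx
    obtain ⟨M, q, hq⟩ := hy
    refine ⟨N + M, p * q, ?_⟩
    rw [map_mul, map_mul, ← hp, ← hq, pow_add]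
    have := ((G_c_comm (PresentedGroup.mk (braidRels m) y)).pow_left N).eq
    simp only [mul_assoc]
    rw [← mul_assoc (_ ^ N), this, mul_assoc]

theorem main_group {m : ℕ} (i : Fin m) (a : G m) (k : ℕ)
    (h : Commute (gen i ^ (k + 1)) a) : Commute (gen i) a := by
  obtain ⟨N, p, hp⟩ := frac a
  have hc : ∀ b : G m, Commute b (toG m (c m) ^ N) := fun b => (G_c_comm b).symm.pow_right N
  have h1 : Commute (gen i ^ (k + 1)) (toG m p) := by
    rw [← hp]
    exact h.mul_right (hc _)
  have h2 : s i ^ (k + 1) * p = p * s i ^ (k + 1) := by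
    apply toG_inj
    rw [map_mul, map_mul, map_pow, toG_s]
    exact h1
  have h3 := main_pos k (len p) i i p le_rfl h2
  have h4 : Commute (gen i) (toG m p) := by
    have := congrArg (toG m) h3
    rwa [map_mul, map_mul, toG_s] at this
  have h5 : a = toG m p * (toG m (c m) ^ N)⁻¹ := by rw [← hp]; group
  rw [h5]
  exact h4.mul_right (hc _).inv_right

end BraidPos

/-- Uniqueness of the conjugating power of a generator: if `a` does not
commute with `σ_i` and `σ_i^(-j) a σ_i^j = σ_i^(-q) a σ_i^q`, then `j = q`. -/
theorem conjugating_power_unique (n : ℕ) (hn : 2 ≤ n)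
    (i : Fin (n - 1)) (a : BraidGroup n) (ha : a * σ i ≠ σ i * a)
    (j q : ℤ)
    (h : (σ (n := n) i) ^ (-j) * a * (σ i) ^ j =
          (σ i) ^ (-q) * a * (σ i) ^ q) : j = q := by
  by_contra hne
  apply ha
  have hz : Commute ((σ (n := n) i) ^ (j - q)) a := by
    have h1 : (σ (n := n) i) ^ j * ((σ (n := n) i) ^ (-j) * a * (σ i) ^ j) * (σ i) ^ (-q) =
      (σ (n := n) i) ^ j * ((σ i) ^ (-q) * a * (σ i) ^ q) * (σ i) ^ (-q) := by rw [h]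
    have h2 : (σ (n := n) i) ^ (j - q) * a = a * (σ (n := n) i) ^ (j - q) := by
      rw [sub_eq_add_neg, zpow_add]
      simpa [mul_assoc] using h1.symm
    exact h2
  obtain ⟨k, hk⟩ : ∃ k : ℕ, (j - q).natAbs = k + 1 :=
    ⟨(j - q).natAbs - 1, by omega⟩
  have hp : Commute ((σ (n := n) i) ^ (k + 1)) a := by
    rw [← hk]
    rcases Int.natAbs_eq (j - q) with e | e
    · rw [e, zpow_natCast] at hz
      exact hz
    · rw [e, zpow_neg, zpow_natCast] at hz
      exact Commute.inv_left_iff.1 hz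
  exact (BraidPos.main_group i a k hp).symm.eq
end
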